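/- arXiv:1810.12475 — 2 statements merged into one kernel-verified Lean document; each statement's English description precedes it below -/
import Mathlib

section
/- For all integers w, p0, p1, p2 and all nonnegative integers u, ℓ, one has G(w,u,ℓ;p0,p1,p2+1) = G(w,u,ℓ;p0,p1,p2) + q^{4p2+ℓ+2} G(w,u−1,ℓ;p0,p1,p2), where G at the second argument u−1 is interpreted as 0 when u = 0. -/
open Finset

noncomputable section

/-- The field `ℚ(q)` of rational functions over `ℚ`. -/
abbrev F : Type := RatFunc ℚ

/-- The indeterminate `q`. -/
noncomputable def qq : F := RatFunc.X

/-- The quantum integer `[n]` with base `v`: `(v^n - v^(-n))/(v - v⁻¹)`. -/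
noncomputable def qint (v : F) (n : ℤ) : F := (v ^ n - v ^ (-n)) / (v - v⁻¹)

/-- The quantum factorial `[m]! = [1][2]⋯[m]` with base `v`. -/
noncomputable def qfact (v : F) (m : ℕ) : F := ∏ k ∈ range m, qint v ((k : ℤ) + 1)

/-- The quantum binomial coefficient `C_v(n,d) = [n][n-1]⋯[n-d+1]/[d]!` for `d ≥ 0`,
and `0` for `d < 0`. -/
noncomputable def qbinom (v : F) (n d : ℤ) : F :=
  if d < 0 then 0
  else (∏ k ∈ range d.toNat, qint v (n - (k : ℤ))) / qfact v d.toNat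

/-- The function `G(w,u,ℓ;p0,p1,p2)` of [CLW, (5.1)]. -/
noncomputable def G (w : ℤ) (u ℓ : ℕ) (p0 p1 p2 : ℤ) : F :=
  (-1 : F) ^ w * qq ^ ((u : ℤ) ^ 2 - w * (u : ℤ) + (ℓ : ℤ) * (u : ℤ)) *
  ((∑ c ∈ range (u + 1), ∑ e ∈ range (u + 1 - c), ∑ t ∈ range (ℓ + 1),
      (let r : ℕ := u - c - e;
       if Even ((t : ℤ) + w - (r : ℤ)) then
         qq ^ (-(t : ℤ) * ((ℓ : ℤ) + (u : ℤ) - 1) - (u : ℤ) * ((c : ℤ) + (e : ℤ)) + 2 * (c : ℤ)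
               + (r : ℤ) * p0 + 2 * (c : ℤ) * p1 + 2 * (e : ℤ) * p2)
           * qbinom qq (ℓ : ℤ) (t : ℤ) * qbinom qq (w + (t : ℤ) + p0) (r : ℤ)
           * qbinom (qq ^ 2) ((w + (t : ℤ) - (r : ℤ)) / 2 + p1) (c : ℤ)
           * qbinom (qq ^ 2) ((w + (t : ℤ) - (r : ℤ)) / 2 + p2) (e : ℤ)
       else 0))
  - (∑ c ∈ range (u + 1), ∑ e ∈ range (u + 1 - c), ∑ t ∈ range (ℓ + 1),
      (let r : ℕ := u - c - e;
       if ¬ Even ((t : ℤ) + w - (r : ℤ)) then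
         qq ^ (-(t : ℤ) * ((ℓ : ℤ) + (u : ℤ) - 1) - ((u : ℤ) - 1) * ((c : ℤ) + (e : ℤ))
               + (r : ℤ) * p0 + 2 * (c : ℤ) * p1 + 2 * (e : ℤ) * p2)
           * qbinom qq (ℓ : ℤ) (t : ℤ) * qbinom qq (w + (t : ℤ) + p0) (r : ℤ)
           * qbinom (qq ^ 2) (1 + (w + (t : ℤ) - (r : ℤ) - 1) / 2 + p1) (c : ℤ)
           * qbinom (qq ^ 2) ((w + (t : ℤ) - (r : ℤ) - 1) / 2 + p2) (e : ℤ)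
       else 0)))


lemma qq_ne : qq ≠ 0 := RatFunc.X_ne_zero

lemma qq_pow_ne (n : ℕ) (hn : n ≠ 0) : qq ^ n ≠ 1 := by
  intro h
  have h1 : (algebraMap (Polynomial ℚ) (RatFunc ℚ)) (Polynomial.X ^ n) = algebraMap (Polynomial ℚ) (RatFunc ℚ) 1 := by
    rw [map_pow, RatFunc.algebraMap_X, map_one]; exact h
  have h2 := RatFunc.algebraMap_injective ℚ h1
  have h3 := congrArg Polynomial.natDegree h2
  simp at h3
  exact hn h3

lemma qint_ne (m : ℕ) : qint (qq ^ 2) ((m : ℤ) + 1) ≠ 0 := by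
  have key : ∀ k : ℕ, (qq ^ 2) ^ ((k : ℤ) + 1) - (qq ^ 2) ^ (-((k : ℤ) + 1)) ≠ 0 := by
    intro k h
    apply qq_pow_ne (4 * (k + 1)) (by omega)
    have h0 : ((qq ^ 2) ^ (k + 1)) ≠ 0 := pow_ne_zero _ (pow_ne_zero _ qq_ne)
    rw [zpow_neg, show ((k : ℤ) + 1) = ((k + 1 : ℕ) : ℤ) by push_cast; rfl, zpow_natCast] at h
    field_simp at h
    linear_combination h
  unfold qint
  refine div_ne_zero (key m) ?_
  have := key 0
  simpa using this

lemma pascal (n : ℤ) (e : ℕ) :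
    (qq ^ 2) ^ ((e : ℤ) + 1) * qbinom (qq ^ 2) (n + 1) ((e + 1 : ℕ) : ℤ)
      = qbinom (qq ^ 2) n ((e + 1 : ℕ) : ℤ) + (qq ^ 2) ^ (n + 1) * qbinom (qq ^ 2) n (e : ℤ) := by
  have hv : qq ^ 2 ≠ 0 := pow_ne_zero _ qq_ne
  have hq := qint_ne e
  have hid : (qq ^ 2) ^ ((e : ℤ) + 1) * qint (qq ^ 2) (n + 1)
      = qint (qq ^ 2) (n - e) + (qq ^ 2) ^ (n + 1) * qint (qq ^ 2) ((e : ℤ) + 1) := by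
    unfold qint
    rw [mul_div_assoc', mul_div_assoc', ← add_div]
    congr 1
    simp only [mul_sub, ← zpow_add₀ hv]
    rw [show (e : ℤ) + 1 + -(n + 1) = -(n - e) by ring,
      show n + 1 + -((e : ℤ) + 1) = n - e by ring, add_comm ((e : ℤ) + 1) (n + 1)]
    ring
  have hf : qfact (qq ^ 2) e ≠ 0 := by
    unfold qfact
    exact Finset.prod_ne_zero_iff.mpr (fun k _ => qint_ne k)
  have hf1 : qfact (qq ^ 2) (e + 1) = qfact (qq ^ 2) e * qint (qq ^ 2) ((e : ℤ) + 1) := by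
    unfold qfact; rw [Finset.prod_range_succ]
  unfold qbinom
  rw [if_neg (by omega), if_neg (by omega), if_neg (by omega), Int.toNat_natCast, Int.toNat_natCast,
    hf1, Finset.prod_range_succ (fun k : ℕ => qint (qq ^ 2) (n - (k : ℤ))), Finset.prod_range_succ']
  have : ∏ k ∈ range e, qint (qq ^ 2) (n + 1 - ((k + 1 : ℕ) : ℤ))
      = ∏ k ∈ range e, qint (qq ^ 2) (n - (k : ℤ)) := by
    refine Finset.prod_congr rfl (fun k _ => ?_)
    congr 1; push_cast; ring
  rw [this]
  simp only [Nat.cast_zero, sub_zero]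
  generalize ∏ k ∈ range e, qint (qq ^ 2) (n - (k : ℤ)) = P
  field_simp
  linear_combination P * hid

lemma qbinom_zero (v : F) (n : ℤ) : qbinom v n 0 = 1 := by
  simp [qbinom, qfact]

lemma sum_rec (k : ℕ) (K : F) (A B D : ℕ → ℕ → F)
    (h0 : ∀ c, A c 0 = B c 0)
    (h1 : ∀ c e, c + e ≤ k → A c (e + 1) = B c (e + 1) + K * D c e) :
    ∑ c ∈ range (k + 1 + 1), ∑ e ∈ range (k + 1 + 1 - c), A c e
      = ∑ c ∈ range (k + 1 + 1), ∑ e ∈ range (k + 1 + 1 - c), B c e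
        + K * ∑ c ∈ range (k + 1), ∑ e ∈ range (k + 1 - c), D c e := by
  have hlast : ∀ X : ℕ → ℕ → F, ∑ e ∈ range (k + 1 + 1 - (k + 1)), X (k + 1) e = X (k + 1) 0 := by
    intro X; rw [show k + 1 + 1 - (k + 1) = 1 by omega]; simp
  rw [Finset.sum_range_succ, Finset.sum_range_succ (fun c => ∑ e ∈ range (k + 1 + 1 - c), B c e),
    hlast, hlast, h0, Finset.mul_sum]
  have : ∑ c ∈ range (k + 1), ∑ e ∈ range (k + 1 + 1 - c), A c e
      = ∑ c ∈ range (k + 1), (∑ e ∈ range (k + 1 + 1 - c), B c e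
        + K * ∑ e ∈ range (k + 1 - c), D c e) := by
    refine Finset.sum_congr rfl (fun c hc => ?_)
    have hc' := Finset.mem_range.mp hc
    rw [show k + 1 + 1 - c = (k + 1 - c) + 1 by omega, Finset.sum_range_succ',
      Finset.sum_range_succ', h0, Finset.mul_sum]
    have : ∑ e ∈ range (k + 1 - c), A c (e + 1)
        = ∑ e ∈ range (k + 1 - c), (B c (e + 1) + K * D c e) := by
      refine Finset.sum_congr rfl (fun e he => h1 c e ?_)
      have := Finset.mem_range.mp he
      omega
    rw [this, Finset.sum_add_distrib]
    ring
  rw [this, Finset.sum_add_distrib]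
  ring

lemma combine (s P P' K L A B S T : F) (h : P * K = L * P') :
    s * P * ((A + K * S) - (B + K * T)) = s * P * (A - B) + L * (s * P' * (S - T)) := by
  linear_combination s * (S - T) * h

/-- Termwise step. -/
lemma term_step (a a' b K : ℤ) (X Y Z : F) (n : ℤ) (e : ℕ)
    (h1 : a' = a + 2 * ((e : ℤ) + 1)) (h2 : a + 2 * (n + 1) = K + b) :
    qq ^ a' * X * Y * Z * qbinom (qq ^ 2) (n + 1) ((e + 1 : ℕ) : ℤ)
      = qq ^ a * X * Y * Z * qbinom (qq ^ 2) n ((e + 1 : ℕ) : ℤ)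
        + qq ^ K * (qq ^ b * X * Y * Z * qbinom (qq ^ 2) n (e : ℤ)) := by
  have hp := pascal n e
  have hz : ∀ m : ℤ, (qq ^ 2) ^ m = qq ^ (2 * m) := by
    intro m; rw [zpow_mul]; norm_cast
  rw [hz, hz] at hp
  have e1 : qq ^ a' = qq ^ a * qq ^ (2 * ((e : ℤ) + 1)) := by
    rw [h1, zpow_add₀ qq_ne]
  have e2 : qq ^ a * qq ^ (2 * (n + 1)) = qq ^ K * qq ^ b := by
    rw [← zpow_add₀ qq_ne, ← zpow_add₀ qq_ne, h2]
  rw [e1]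
  linear_combination (qq ^ a * X * Y * Z) * hp + X * Y * Z * qbinom (qq ^ 2) n (e : ℤ) * e2

def EV (w : ℤ) (u ℓ c e t : ℕ) (p0 p1 p2 : ℤ) : F :=
      (let r : ℕ := u - c - e;
       if Even ((t : ℤ) + w - (r : ℤ)) then
         qq ^ (-(t : ℤ) * ((ℓ : ℤ) + (u : ℤ) - 1) - (u : ℤ) * ((c : ℤ) + (e : ℤ)) + 2 * (c : ℤ)
               + (r : ℤ) * p0 + 2 * (c : ℤ) * p1 + 2 * (e : ℤ) * p2)
           * qbinom qq (ℓ : ℤ) (t : ℤ) * qbinom qq (w + (t : ℤ) + p0) (r : ℤ)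
           * qbinom (qq ^ 2) ((w + (t : ℤ) - (r : ℤ)) / 2 + p1) (c : ℤ)
           * qbinom (qq ^ 2) ((w + (t : ℤ) - (r : ℤ)) / 2 + p2) (e : ℤ)
       else 0)

lemma EV_step (w : ℤ) (k ℓ c e t : ℕ) (p0 p1 p2 : ℤ) (h : c + e ≤ k) :
    EV w (k + 1) ℓ c (e + 1) t p0 p1 (p2 + 1) = EV w (k + 1) ℓ c (e + 1) t p0 p1 p2
      + qq ^ (4 * p2 + w + 1 - 2 * (k : ℤ)) * EV w k ℓ c e t p0 p1 p2 := by
  unfold EV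
  have hr : k + 1 - c - (e + 1) = k - c - e := by omega
  dsimp only
  rw [hr]
  by_cases hp : Even ((t : ℤ) + w - ((k - c - e : ℕ) : ℤ))
  · have hm : 2 * ((w + (t : ℤ) - ((k - c - e : ℕ) : ℤ)) / 2) = w + (t : ℤ) - ((k - c - e : ℕ) : ℤ) := by
      
      obtain ⟨x, hx⟩ := hp
      omega
    have hrk : ((k - c - e : ℕ) : ℤ) = k - c - e := by omega
    rw [if_pos hp, if_pos hp, if_pos hp, ← add_assoc]
    generalize (w + (t : ℤ) - ((k - c - e : ℕ) : ℤ)) / 2 = m at hm ⊢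
    refine term_step _ _ _ _ _ _ _ _ e ?_ ?_
    · push_cast; ring
    · rw [hrk] at hm ⊢
      push_cast
      linear_combination hm
  · simp [hp]

def OD (w : ℤ) (u ℓ c e t : ℕ) (p0 p1 p2 : ℤ) : F :=
      (let r : ℕ := u - c - e;
       if ¬ Even ((t : ℤ) + w - (r : ℤ)) then
         qq ^ (-(t : ℤ) * ((ℓ : ℤ) + (u : ℤ) - 1) - ((u : ℤ) - 1) * ((c : ℤ) + (e : ℤ))
               + (r : ℤ) * p0 + 2 * (c : ℤ) * p1 + 2 * (e : ℤ) * p2)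
           * qbinom qq (ℓ : ℤ) (t : ℤ) * qbinom qq (w + (t : ℤ) + p0) (r : ℤ)
           * qbinom (qq ^ 2) (1 + (w + (t : ℤ) - (r : ℤ) - 1) / 2 + p1) (c : ℤ)
           * qbinom (qq ^ 2) ((w + (t : ℤ) - (r : ℤ) - 1) / 2 + p2) (e : ℤ)
       else 0)

lemma OD_step (w : ℤ) (k ℓ c e t : ℕ) (p0 p1 p2 : ℤ) (h : c + e ≤ k) :
    OD w (k + 1) ℓ c (e + 1) t p0 p1 (p2 + 1) = OD w (k + 1) ℓ c (e + 1) t p0 p1 p2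
      + qq ^ (4 * p2 + w + 1 - 2 * (k : ℤ)) * OD w k ℓ c e t p0 p1 p2 := by
  unfold OD
  have hr : k + 1 - c - (e + 1) = k - c - e := by omega
  dsimp only
  rw [hr]
  by_cases hp : Even ((t : ℤ) + w - ((k - c - e : ℕ) : ℤ))
  · simp [hp]
  · have hm : 2 * ((w + (t : ℤ) - ((k - c - e : ℕ) : ℤ) - 1) / 2) = w + (t : ℤ) - ((k - c - e : ℕ) : ℤ) - 1 := by
      rw [Int.not_even_iff_odd] at hp
      obtain ⟨x, hx⟩ := hp
      omega
    have hrk : ((k - c - e : ℕ) : ℤ) = k - c - e := by omega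
    rw [if_pos hp, if_pos hp, if_pos hp, ← add_assoc]
    generalize (w + (t : ℤ) - ((k - c - e : ℕ) : ℤ) - 1) / 2 = m at hm ⊢
    refine term_step _ _ _ _ _ _ _ _ e ?_ ?_
    · push_cast; ring
    · rw [hrk] at hm ⊢
      push_cast
      linear_combination hm

/-- Recursion in `p2`:
`G(w,u,ℓ;p0,p1,p2+1) = G(w,u,ℓ;p0,p1,p2) + q^{4p2+ℓ+2} G(w,u−1,ℓ;p0,p1,p2)`,
where the term with second argument `u−1` is interpreted as `0` when `u = 0`. -/
theorem G_rec_p2 (w p0 p1 p2 : ℤ) (u ℓ : ℕ) :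
    G w u ℓ p0 p1 (p2 + 1)
      = G w u ℓ p0 p1 p2
        + qq ^ (4 * p2 + (ℓ : ℤ) + 2) * (if u = 0 then 0 else G w (u - 1) ℓ p0 p1 p2) := by
  rcases u with _ | k
  · simp [G, qbinom_zero]
  rw [if_neg (Nat.succ_ne_zero k), Nat.add_sub_cancel]
  unfold G
  have hE := sum_rec k (qq ^ (4 * p2 + w + 1 - 2 * (k : ℤ)))
    (fun c e => ∑ t ∈ range (ℓ + 1), EV w (k + 1) ℓ c e t p0 p1 (p2 + 1))
    (fun c e => ∑ t ∈ range (ℓ + 1), EV w (k + 1) ℓ c e t p0 p1 p2)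
    (fun c e => ∑ t ∈ range (ℓ + 1), EV w k ℓ c e t p0 p1 p2)
    (fun c => Finset.sum_congr rfl (fun t _ => by
      simp only [EV, qbinom_zero, Nat.cast_zero, mul_zero, zero_mul]))
    (fun c e h => by
      rw [Finset.mul_sum, ← Finset.sum_add_distrib]
      exact Finset.sum_congr rfl (fun t _ => EV_step w k ℓ c e t p0 p1 p2 h))
  have hO := sum_rec k (qq ^ (4 * p2 + w + 1 - 2 * (k : ℤ)))
    (fun c e => ∑ t ∈ range (ℓ + 1), OD w (k + 1) ℓ c e t p0 p1 (p2 + 1))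
    (fun c e => ∑ t ∈ range (ℓ + 1), OD w (k + 1) ℓ c e t p0 p1 p2)
    (fun c e => ∑ t ∈ range (ℓ + 1), OD w k ℓ c e t p0 p1 p2)
    (fun c => Finset.sum_congr rfl (fun t _ => by
      simp only [OD, qbinom_zero, Nat.cast_zero, mul_zero, zero_mul]))
    (fun c e h => by
      rw [Finset.mul_sum, ← Finset.sum_add_distrib]
      exact Finset.sum_congr rfl (fun t _ => OD_step w k ℓ c e t p0 p1 p2 h))
  have hpre : qq ^ (((k + 1 : ℕ) : ℤ) ^ 2 - w * ((k + 1 : ℕ) : ℤ) + (ℓ : ℤ) * ((k + 1 : ℕ) : ℤ))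
        * qq ^ (4 * p2 + w + 1 - 2 * (k : ℤ))
      = qq ^ (4 * p2 + (ℓ : ℤ) + 2) * qq ^ ((k : ℤ) ^ 2 - w * (k : ℤ) + (ℓ : ℤ) * (k : ℤ)) := by
    rw [← zpow_add₀ qq_ne, ← zpow_add₀ qq_ne]
    congr 1; push_cast; ring
  simp only [EV] at hE
  simp only [OD] at hO
  dsimp only
  rw [hE, hO]
  exact combine _ _ _ _ _ _ _ _ _ hpre

end
end

section
/- For every integer w and every positive integer u, one has T(w,u,0) = 0. -/
open Finset

noncomputable section

/-- The function `T(w,u,ℓ)` of [CLW, (3.14)]. -/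
noncomputable def T (w : ℤ) (u ℓ : ℕ) : F :=
  (∑ c ∈ range (u + 1), ∑ e ∈ range (u + 1 - c), ∑ t ∈ range (ℓ + 1),
      (let r : ℕ := u - c - e;
       if Even ((t : ℤ) + w - (r : ℤ)) then
         qq ^ (-(t : ℤ) * ((ℓ : ℤ) + (u : ℤ) - 1) + ((ℓ : ℤ) + (u : ℤ)) * ((c : ℤ) - (e : ℤ)))
           * qbinom qq (ℓ : ℤ) (t : ℤ) * qbinom qq (w + (t : ℤ) - (ℓ : ℤ)) (r : ℤ)
           * qbinom (qq ^ 2) ((u : ℤ) - 1 + (w + (t : ℤ) - (r : ℤ)) / 2) (c : ℤ)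
           * qbinom (qq ^ 2) ((w + (t : ℤ) - (r : ℤ)) / 2 - (ℓ : ℤ)) (e : ℤ)
       else 0))
  - (∑ c ∈ range (u + 1), ∑ e ∈ range (u + 1 - c), ∑ t ∈ range (ℓ + 1),
      (let r : ℕ := u - c - e;
       if ¬ Even ((t : ℤ) + w - (r : ℤ)) then
         qq ^ (-(t : ℤ) * ((ℓ : ℤ) + (u : ℤ) - 1) + ((ℓ : ℤ) + (u : ℤ) - 1) * ((c : ℤ) - (e : ℤ)))
           * qbinom qq (ℓ : ℤ) (t : ℤ) * qbinom qq (w + (t : ℤ) - (ℓ : ℤ)) (r : ℤ)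
           * qbinom (qq ^ 2) ((u : ℤ) + (w + (t : ℤ) - (r : ℤ) - 1) / 2) (c : ℤ)
           * qbinom (qq ^ 2) ((w + (t : ℤ) - (r : ℤ) - 1) / 2 - (ℓ : ℤ)) (e : ℤ)
       else 0))

/-- Auxiliary: not a root of unity. -/
def Gen (v : F) : Prop := v ≠ 0 ∧ ∀ n : ℕ, 0 < n → v ^ n ≠ 1

theorem gen_qq : Gen qq := by
  refine ⟨RatFunc.X_ne_zero, fun n hn h => ?_⟩
  have h1 : algebraMap (Polynomial ℚ) (RatFunc ℚ) (Polynomial.X ^ n) =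
      algebraMap (Polynomial ℚ) (RatFunc ℚ) 1 := by
    rw [map_pow, RatFunc.algebraMap_X, map_one]; exact h
  have h2 := RatFunc.algebraMap_injective ℚ h1
  have h3 := congrArg Polynomial.natDegree h2
  simp at h3
  omega

theorem gen_qq2 : Gen (qq ^ 2) := by
  refine ⟨pow_ne_zero _ gen_qq.1, fun n hn h => ?_⟩
  rw [← pow_mul] at h
  exact gen_qq.2 _ (by omega) h

theorem gen_sub {v : F} (hv : Gen v) : v - v⁻¹ ≠ 0 := by
  intro h
  have h0 := hv.1
  apply hv.2 2 (by norm_num)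
  field_simp at h
  linear_combination h

theorem qint_ne_s13 {v : F} (hv : Gen v) (k : ℕ) : qint v ((k : ℤ) + 1) ≠ 0 := by
  unfold qint
  refine div_ne_zero ?_ (gen_sub hv)
  intro h
  apply hv.2 (2 * (k + 1)) (by omega)
  have h0 := hv.1
  have h1 : v ^ ((k : ℤ) + 1) = v ^ (k + 1) := by
    rw [← zpow_natCast]; push_cast; rfl
  rw [zpow_neg, h1] at h
  have h2 : v ^ (k + 1) ≠ 0 := pow_ne_zero _ h0
  field_simp at h
  rw [mul_comm, pow_mul]
  linear_combination h

theorem qfact_ne {v : F} (hv : Gen v) (k : ℕ) : qfact v k ≠ 0 :=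
  Finset.prod_ne_zero_iff.2 fun i _ => qint_ne_s13 hv i

theorem qfact_succ (v : F) (k : ℕ) : qfact v (k + 1) = qfact v k * qint v ((k : ℤ) + 1) := by
  unfold qfact; rw [prod_range_succ]

/-- falling product -/
def fp (v : F) (n : ℤ) (d : ℕ) : F := ∏ k ∈ range d, qint v (n - (k : ℤ))

theorem fp_succ (v : F) (n : ℤ) (d : ℕ) : fp v n (d + 1) = fp v n d * qint v (n - d) := by
  unfold fp; rw [prod_range_succ]

theorem fp_add (v : F) (n : ℤ) (r i : ℕ) : fp v n (r + i) = fp v n r * fp v (n - r) i := by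
  unfold fp
  rw [prod_range_add]
  congr 1
  refine prod_congr rfl fun k _ => ?_
  congr 1
  push_cast; ring

theorem fp_succ' (v : F) (n : ℤ) (d : ℕ) : fp v (n + 1) (d + 1) = qint v (n + 1) * fp v n d := by
  rw [add_comm d 1, fp_add]
  simp [fp]

theorem fp_self (v : F) (n : ℕ) : fp v n n = qfact v n := by
  induction n with
  | zero => simp [fp, qfact]
  | succ k ih =>
    rw [qfact_succ, ← ih]
    push_cast
    rw [fp_succ', mul_comm]

theorem qb_eq (v : F) (n : ℤ) (d : ℕ) : qbinom v n d = fp v n d / qfact v d := by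
  unfold qbinom fp
  simp

theorem qb_zero (v : F) (n : ℤ) : qbinom v n ((0 : ℕ) : ℤ) = 1 := by
  rw [qb_eq]; simp [fp, qfact]

theorem qint_pascal {v : F} (hv : Gen v) (n : ℤ) (d : ℕ) :
    qint v (n + 1) = v ^ (d + 1) * qint v (n - d) + v ^ (-n) * v ^ d * qint v ((d : ℤ) + 1) := by
  have h0 := hv.1
  unfold qint
  rw [← mul_div_assoc, ← mul_div_assoc, ← add_div]
  congr 1
  simp only [← zpow_natCast, mul_sub, ← zpow_add₀ h0]
  push_cast
  ring_nf

theorem pascal_s13 {v : F} (hv : Gen v) (n : ℤ) (d : ℕ) :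
    qbinom v (n + 1) ((d + 1 : ℕ) : ℤ) =
      v ^ (d + 1) * qbinom v n ((d + 1 : ℕ) : ℤ) + v ^ (-n) * v ^ d * qbinom v n (d : ℤ) := by
  rw [qb_eq, qb_eq, qb_eq, fp_succ', fp_succ, qfact_succ, qint_pascal hv n d]
  have h1 := qfact_ne hv d
  have h2 := qint_ne_s13 hv d
  generalize qfact v d = a at *
  generalize qint v ((d : ℤ) + 1) = b at *
  generalize v ^ (-n) = c
  field_simp

theorem qb_top {v : F} (k : ℕ) : qbinom v (k : ℤ) ((k + 1 : ℕ) : ℤ) = 0 := by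
  rw [qb_eq, fp_succ]
  simp [qint]

theorem trinom {v : F} (hv : Gen v) (w : ℤ) (r i : ℕ) :
    qbinom v w r * qbinom v (w - r) i =
      qbinom v w ((r + i : ℕ) : ℤ) * qbinom v ((r + i : ℕ) : ℤ) r := by
  have h : fp v ((r + i : ℕ) : ℤ) r * qfact v i = qfact v (r + i) := by
    rw [← fp_self, ← fp_self, fp_add]
    congr 2
    push_cast; ring
  rw [qb_eq, qb_eq, qb_eq, qb_eq, fp_add, ← h]
  have h1 := qfact_ne hv r
  have h2 := qfact_ne hv i
  have h3 : fp v ((r + i : ℕ) : ℤ) r ≠ 0 := by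
    intro h4; rw [h4, zero_mul] at h; exact qfact_ne hv _ h.symm
  field_simp

theorem alt_partial {v : F} (hv : Gen v) (k N : ℕ) :
    ∑ r ∈ range (N + 1), (-1) ^ r * v ^ (r * k) * qbinom v ((k + 1 : ℕ) : ℤ) (r : ℤ) =
      (-1) ^ N * v ^ (N * (k + 1)) * qbinom v (k : ℤ) (N : ℤ) := by
  induction N with
  | zero => rw [sum_range_one, qb_zero, qb_zero]; simp
  | succ N ih =>
    rw [sum_range_succ, ih]
    have := pascal_s13 hv (k : ℤ) N
    push_cast at this ⊢
    rw [this, zpow_neg, zpow_natCast]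
    have h0 := hv.1
    field_simp
    ring

theorem alt_sum {v : F} (hv : Gen v) (k : ℕ) :
    ∑ p ∈ antidiagonal (k + 1), (-1) ^ p.1 * v ^ (p.1 * k) *
      qbinom v ((k + 1 : ℕ) : ℤ) (p.1 : ℤ) = 0 := by
  rw [Finset.Nat.sum_antidiagonal_eq_sum_range_succ_mk]
  simp only [Nat.succ_eq_add_one]
  rw [alt_partial hv, qb_top, mul_zero]

/-- generating series -/
def B (v : F) (n : ℤ) : PowerSeries F := PowerSeries.mk fun d => qbinom v n (d : ℤ)

/-- rescaling -/
abbrev rs (a : F) : PowerSeries F →+* PowerSeries F := PowerSeries.rescale a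

/-- the linear factor -/
def lf (a : F) : PowerSeries F := 1 + PowerSeries.C a * PowerSeries.X

theorem lf_ne (a : F) : lf a ≠ 0 := by
  intro h
  have := congrArg (PowerSeries.coeff 0) h
  simp [lf] at this

theorem rs_rs (a b : F) (f : PowerSeries F) : rs a (rs b f) = rs (a * b) f := by
  ext n
  simp [rs, PowerSeries.coeff_rescale, mul_pow, mul_assoc]

theorem rs_lf (a b : F) : rs a (lf b) = lf (a * b) := by
  have h : rs a (PowerSeries.C b) = PowerSeries.C b := by
    ext n
    rcases n with _ | n <;> simp [rs, PowerSeries.coeff_rescale, PowerSeries.coeff_C]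
  unfold lf
  rw [map_add, map_mul, map_one, h, PowerSeries.rescale_X, ← mul_assoc, ← map_mul, mul_comm b]

theorem rs_inj {a : F} (ha : a ≠ 0) {f g : PowerSeries F} : rs a f = rs a g ↔ f = g := by
  refine ⟨fun h => ?_, fun h => by rw [h]⟩
  have := congrArg (rs a⁻¹) h
  rw [rs_rs, rs_rs, inv_mul_cancel₀ ha] at this
  simpa [rs] using this

theorem B_succ {v : F} (hv : Gen v) (n : ℤ) : B v (n + 1) = lf (v ^ (-n)) * rs v (B v n) := by
  ext d
  rcases d with _ | d
  · have h1 := qb_zero v n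
    have h2 := qb_zero v (n + 1)
    simp only [lf, add_mul, one_mul, mul_assoc, map_add, PowerSeries.coeff_C_mul,
      PowerSeries.coeff_zero_X_mul, rs, PowerSeries.coeff_rescale, B, PowerSeries.coeff_mk]
    rw [h1, h2]; simp
  · have := pascal_s13 hv n d
    simp only [lf, add_mul, one_mul, mul_assoc, map_add, PowerSeries.coeff_C_mul,
      PowerSeries.coeff_succ_X_mul, rs, PowerSeries.coeff_rescale, B, PowerSeries.coeff_mk]
    rw [this, mul_assoc]

theorem B_zero (v : F) : B v 0 = 1 := by
  ext d
  rcases d with _ | d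
  · have := qb_zero v 0
    simpa [B] using this
  · have := qb_top (v := v) 0
    simp only [B, PowerSeries.coeff_mk, PowerSeries.coeff_one]
    rw [qb_eq, add_comm d 1, fp_add]
    simp [fp, qint]

theorem int_ind {P : ℤ → Prop} (h0 : P 0) (h : ∀ n, P n ↔ P (n + 1)) (n : ℤ) : P n := by
  induction n using Int.induction_on with
  | zero => exact h0
  | succ i ih => exact (h _).1 ih
  | pred i ih => exact (h _).2 (by simpa using ih)

theorem B_add {v : F} (hv : Gen v) (a b : ℤ) :
    B v (a + b) = rs (v ^ b) (B v a) * rs (v ^ (-a)) (B v b) := by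
  have h0 := hv.1
  refine int_ind (P := fun b => B v (a + b) = rs (v ^ b) (B v a) * rs (v ^ (-a)) (B v b)) ?_ ?_ b
  · simp [B_zero]
  · intro n
    rw [← add_assoc, B_succ hv, B_succ hv, map_mul, rs_lf, rs_rs, ← zpow_add₀ h0, ← neg_add,
      mul_left_comm, mul_right_inj' (lf_ne _), ← rs_inj h0, map_mul, rs_rs, rs_rs,
      zpow_add_one₀ h0, mul_comm v, mul_comm v]

theorem B_even {v : F} (hv : Gen v) (hv2 : Gen (v ^ 2)) (s : ℤ) :
    B v (2 * s) = rs v (B (v ^ 2) s) * rs v⁻¹ (B (v ^ 2) s) := by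
  have h0 := hv.1
  refine int_ind (P := fun s => B v (2 * s) = rs v (B (v ^ 2) s) * rs v⁻¹ (B (v ^ 2) s)) ?_ ?_ s
  · simp [B_zero]
  · intro n
    have e : 2 * (n + 1) = 2 * n + 1 + 1 := by ring
    have e1 : v * v ^ (-(2 * n)) = v * (v ^ 2) ^ (-n) := by
      rw [← zpow_natCast v 2, ← zpow_mul]; push_cast; ring_nf
    have e2 : v ^ (-(2 * n + 1)) = v⁻¹ * (v ^ 2) ^ (-n) := by
      rw [← zpow_natCast v 2, ← zpow_mul, ← zpow_neg_one, ← zpow_add₀ h0]; push_cast; ring_nf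
    have e3 : v * v ^ 2 = v ^ 2 * v := by ring
    have e4 : v⁻¹ * v ^ 2 = v ^ 2 * v⁻¹ := by ring
    rw [e, B_succ hv, B_succ hv, B_succ hv2, map_mul, map_mul, map_mul, rs_lf, rs_lf, rs_lf,
      rs_rs, rs_rs, rs_rs, e1, e2, e3, e4, ← pow_two, ← rs_rs (v ^ 2) v, ← rs_rs (v ^ 2) v⁻¹]
    have key : ∀ a b x y z : PowerSeries F, a ≠ 0 → b ≠ 0 →
        (a * (b * x) = b * y * (a * z) ↔ x = y * z) := by
      intro a b x y z ha hb
      rw [show b * y * (a * z) = a * (b * (y * z)) by ring, mul_right_inj' ha,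
        mul_right_inj' hb]
    rw [key _ _ _ _ _ (lf_ne _) (lf_ne _)]
    rw [← map_mul, rs_inj (pow_ne_zero 2 h0)]

theorem B_odd {v : F} (hv : Gen v) (hv2 : Gen (v ^ 2)) (s : ℤ) :
    B v (2 * s + 1) = B (v ^ 2) (s + 1) * B (v ^ 2) s := by
  have h0 := hv.1
  have e1 : v ^ (-(2 * s)) = (v ^ 2) ^ (-s) := by
    rw [← zpow_natCast v 2, ← zpow_mul]; push_cast; ring_nf
  rw [B_succ hv, B_even hv hv2, B_succ hv2, map_mul, rs_rs, rs_rs, mul_inv_cancel₀ h0, ← pow_two,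
    e1]
  simp [mul_assoc]

theorem zpow_sq (v : F) (n : ℤ) : (v ^ 2) ^ n = v ^ (2 * n) := by
  rw [← zpow_natCast v 2, ← zpow_mul]; norm_cast

theorem key_even {v : F} (hv : Gen v) (hv2 : Gen (v ^ 2)) (u s : ℤ) :
    rs (v ^ u) (B (v ^ 2) (u - 1 + s)) * rs (v ^ (-u)) (B (v ^ 2) s) =
      rs (v ^ (1 - u)) (B v (2 * s)) * rs (v ^ (u + 2 * s)) (B (v ^ 2) (u - 1)) := by
  have h0 := hv.1
  rw [B_add hv2, B_even hv hv2]
  simp only [map_mul, rs_rs, zpow_sq, ← zpow_add₀ h0]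
  rw [← zpow_add_one₀ h0, ← zpow_sub_one₀ h0]
  ring_nf

theorem key_odd {v : F} (hv : Gen v) (hv2 : Gen (v ^ 2)) (u s : ℤ) :
    rs (v ^ (u - 1)) (B (v ^ 2) (u + s)) * rs (v ^ (-(u - 1))) (B (v ^ 2) s) =
      rs (v ^ (1 - u)) (B v (2 * s + 1)) * rs (v ^ (u + (2 * s + 1))) (B (v ^ 2) (u - 1)) := by
  have h0 := hv.1
  rw [show u + s = (u - 1) + (s + 1) by ring, B_add hv2, B_odd hv hv2]
  simp only [map_mul, rs_rs, zpow_sq, ← zpow_add₀ h0]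
  ring_nf

theorem triple_assoc (u : ℕ) (g : ℕ → ℕ → ℕ → F) :
    ∑ p ∈ antidiagonal u, ∑ x ∈ antidiagonal p.2, g p.1 x.1 x.2 =
      ∑ p ∈ antidiagonal u, ∑ x ∈ antidiagonal p.2, g x.1 x.2 p.1 := by
  rw [sum_sigma', sum_sigma']
  refine sum_nbij' (fun a => ⟨(a.2.2, a.1.1 + a.2.1), (a.1.1, a.2.1)⟩)
    (fun a => ⟨(a.2.1, a.2.2 + a.1.1), (a.2.2, a.1.1)⟩) ?_ ?_ ?_ ?_ ?_
  · rintro ⟨⟨a, b⟩, ⟨c, d⟩⟩ h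
    simp only [mem_sigma, HasAntidiagonal.mem_antidiagonal] at h ⊢
    refine ⟨?_, ?_⟩ <;> first | trivial | omega
  · rintro ⟨⟨a, b⟩, ⟨c, d⟩⟩ h
    simp only [mem_sigma, HasAntidiagonal.mem_antidiagonal] at h ⊢
    refine ⟨?_, ?_⟩ <;> first | trivial | omega
  · rintro ⟨⟨a, b⟩, ⟨c, d⟩⟩ h
    simp only [mem_sigma, HasAntidiagonal.mem_antidiagonal] at h ⊢
    obtain ⟨-, rfl⟩ := h
    rfl
  · rintro ⟨⟨a, b⟩, ⟨c, d⟩⟩ h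
    simp only [mem_sigma, HasAntidiagonal.mem_antidiagonal] at h ⊢
    obtain ⟨-, rfl⟩ := h
    rfl
  · rintro ⟨⟨a, b⟩, ⟨c, d⟩⟩ h
    rfl

theorem range_triple (u : ℕ) (g : ℕ → ℕ → ℕ → F) :
    ∑ c ∈ range (u + 1), ∑ e ∈ range (u + 1 - c), g c e (u - c - e) =
      ∑ p ∈ antidiagonal u, ∑ x ∈ antidiagonal p.2, g x.1 x.2 p.1 := by
  rw [← triple_assoc, Finset.Nat.sum_antidiagonal_eq_sum_range_succ_mk]
  refine sum_congr rfl fun c hc => ?_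
  rw [Finset.Nat.sum_antidiagonal_eq_sum_range_succ_mk]
  have : u + 1 - c = (u - c) + 1 := by
    have := mem_range.1 hc
    omega
  rw [this]

theorem coeff_prod (a b v v' : F) (n n' : ℤ) (m : ℕ) :
    PowerSeries.coeff m (rs a (B v n) * rs b (B v' n')) =
      ∑ x ∈ antidiagonal m, a ^ x.1 * qbinom v n x.1 * (b ^ x.2 * qbinom v' n' x.2) := by
  rw [PowerSeries.coeff_mul]
  simp [rs, B, PowerSeries.coeff_rescale]

/-- the common value of the inner sums -/
def S (u : ℕ) (n : ℤ) (m : ℕ) : F :=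
  PowerSeries.coeff m (rs (qq ^ (1 - (u : ℤ))) (B qq n) *
    rs (qq ^ ((u : ℤ) + n)) (B (qq ^ 2) ((u : ℤ) - 1)))

theorem S_even (u : ℕ) (n : ℤ) (hn : Even n) (m : ℕ) :
    ∑ x ∈ antidiagonal m, qq ^ ((u : ℤ) * ((x.1 : ℤ) - x.2)) *
      qbinom (qq ^ 2) ((u : ℤ) - 1 + n / 2) x.1 * qbinom (qq ^ 2) (n / 2) x.2 = S u n m := by
  obtain ⟨s, rfl⟩ := hn
  have hs : (s + s) / 2 = s := by omega
  have h0 := gen_qq.1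
  rw [hs, ← two_mul, S, ← key_even gen_qq gen_qq2, coeff_prod]
  refine sum_congr rfl fun x _ => ?_
  have : qq ^ ((u : ℤ) * ((x.1 : ℤ) - x.2)) = (qq ^ (u : ℤ)) ^ x.1 * (qq ^ (-(u : ℤ))) ^ x.2 := by
    rw [← zpow_natCast (qq ^ (u : ℤ)), ← zpow_natCast (qq ^ (-(u : ℤ))), ← zpow_mul, ← zpow_mul,
      ← zpow_add₀ h0]
    ring_nf
  rw [this]; ring

theorem S_odd (u : ℕ) (n : ℤ) (hn : ¬ Even n) (m : ℕ) :
    ∑ x ∈ antidiagonal m, qq ^ (((u : ℤ) - 1) * ((x.1 : ℤ) - x.2)) *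
      qbinom (qq ^ 2) ((u : ℤ) + (n - 1) / 2) x.1 * qbinom (qq ^ 2) ((n - 1) / 2) x.2 =
      S u n m := by
  obtain ⟨s, rfl⟩ := Int.not_even_iff_odd.1 hn
  have hs : (2 * s + 1 - 1) / 2 = s := by omega
  have h0 := gen_qq.1
  rw [hs, S, ← key_odd gen_qq gen_qq2, coeff_prod]
  refine sum_congr rfl fun x _ => ?_
  have : qq ^ (((u : ℤ) - 1) * ((x.1 : ℤ) - x.2)) =
      (qq ^ ((u : ℤ) - 1)) ^ x.1 * (qq ^ (-((u : ℤ) - 1))) ^ x.2 := by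
    rw [← zpow_natCast (qq ^ ((u : ℤ) - 1)), ← zpow_natCast (qq ^ (-((u : ℤ) - 1))), ← zpow_mul,
      ← zpow_mul, ← zpow_add₀ h0]
    ring_nf
  rw [this]; ring

/-- the sign -/
def sg (w : ℤ) : F := if Even w then 1 else -1

theorem sg_sub (w : ℤ) (r : ℕ) : sg (w - r) = sg w * (-1) ^ r := by
  unfold sg
  rcases Nat.even_or_odd r with h | h
  · rw [h.neg_one_pow, mul_one]
    have : Even (w - r) ↔ Even w := by
      have : Even (r : ℤ) := by exact_mod_cast h
      simp [Int.even_sub, this]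
    simp [this]
  · rw [h.neg_one_pow]
    have h' : ¬ Even (r : ℤ) := by
      rw [Int.not_even_iff_odd]; exact_mod_cast h
    have : Even (w - r) ↔ ¬ Even w := by
      simp [Int.even_sub, h']
    by_cases hw : Even w <;> simp [this, hw]

theorem T_zero_eq (w : ℤ) (u : ℕ) :
    T w u 0 = ∑ p ∈ antidiagonal u, sg (w - p.1) * qbinom qq w p.1 * S u (w - p.1) p.2 := by
  have hq : qbinom qq 0 0 = 1 := by simpa using qb_zero qq 0
  unfold T
  simp only [zero_add, sum_range_one, Nat.cast_zero, neg_zero, zero_mul, add_zero, sub_zero, hq,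
    mul_one]
  rw [range_triple u (fun c e r => if Even (w - (r : ℤ)) then
      qq ^ ((u : ℤ) * ((c : ℤ) - e)) * qbinom qq w r *
        qbinom (qq ^ 2) ((u : ℤ) - 1 + (w - r) / 2) c * qbinom (qq ^ 2) ((w - r) / 2) e else 0),
    range_triple u (fun c e r => if ¬ Even (w - (r : ℤ)) then
      qq ^ (((u : ℤ) - 1) * ((c : ℤ) - e)) * qbinom qq w r *
        qbinom (qq ^ 2) ((u : ℤ) + (w - r - 1) / 2) c * qbinom (qq ^ 2) ((w - r - 1) / 2) e
        else 0),
    ← sum_sub_distrib]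
  refine sum_congr rfl fun p _ => ?_
  by_cases h : Even (w - (p.1 : ℤ))
  · simp only [h, if_true, not_true_eq_false, if_false, sum_const_zero, sub_zero, sg, one_mul]
    rw [← S_even u _ h, mul_sum]
    refine sum_congr rfl fun x _ => ?_
    ring
  · simp only [h, if_true, not_false_eq_true, if_false, sum_const_zero, zero_sub, sg]
    rw [← S_odd u _ h, mul_sum, ← sum_neg_distrib]
    refine sum_congr rfl fun x _ => ?_
    ring

theorem T_ell_zero_aux (w : ℤ) (u : ℕ) :
    ∑ p ∈ antidiagonal (u + 1), (-1) ^ p.1 * qbinom qq w p.1 * S (u + 1) (w - p.1) p.2 = 0 := by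
  have h0 := gen_qq.1
  simp only [S, coeff_prod, mul_sum]
  rw [triple_assoc (u + 1) (fun r i j => (-1) ^ r * qbinom qq w r *
    ((qq ^ (1 - ((u + 1 : ℕ) : ℤ))) ^ i * qbinom qq (w - r) i *
    ((qq ^ (((u + 1 : ℕ) : ℤ) + (w - r))) ^ j * qbinom (qq ^ 2) (((u + 1 : ℕ) : ℤ) - 1) j)))]
  refine sum_eq_zero fun p hp => ?_
  obtain ⟨j, k⟩ := p
  simp only [HasAntidiagonal.mem_antidiagonal] at hp
  rcases k with _ | k
  · have hj : j = u + 1 := by omega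
    subst hj
    have := qb_top (v := qq ^ 2) u
    refine sum_eq_zero fun x _ => ?_
    simp only [Nat.cast_add, Nat.cast_one, add_sub_cancel_right] at this ⊢
    rw [this]; ring
  · have hu : u = j + k := by omega
    subst hu
    have key : ∀ x ∈ antidiagonal (k + 1),
        (-1) ^ x.1 * qbinom qq w x.1 *
          ((qq ^ (1 - ((j + k + 1 : ℕ) : ℤ))) ^ x.2 * qbinom qq (w - x.1) x.2 *
          ((qq ^ (((j + k + 1 : ℕ) : ℤ) + (w - x.1))) ^ j *
            qbinom (qq ^ 2) (((j + k + 1 : ℕ) : ℤ) - 1) j)) =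
        (qq ^ (-((j : ℤ) + k) * (k + 1) + (j + k + 1 + w) * j) * qbinom qq w ((k + 1 : ℕ) : ℤ) *
          qbinom (qq ^ 2) (((j + k + 1 : ℕ) : ℤ) - 1) j) *
          ((-1) ^ x.1 * qq ^ (x.1 * k) * qbinom qq ((k + 1 : ℕ) : ℤ) (x.1 : ℤ)) := by
      rintro ⟨r, i⟩ hx
      simp only [HasAntidiagonal.mem_antidiagonal] at hx
      have ht := trinom gen_qq w r i
      rw [hx] at ht
      have hki : (k : ℤ) = r + i - 1 := by omega
      have he : (qq ^ (1 - ((j + k + 1 : ℕ) : ℤ))) ^ i *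
          (qq ^ (((j + k + 1 : ℕ) : ℤ) + (w - r))) ^ j =
          qq ^ (-((j : ℤ) + k) * (k + 1) + (j + k + 1 + w) * j) * qq ^ (r * k) := by
        rw [← zpow_natCast (qq ^ (1 - ((j + k + 1 : ℕ) : ℤ))),
          ← zpow_natCast (qq ^ (((j + k + 1 : ℕ) : ℤ) + (w - r))), ← zpow_natCast qq (r * k),
          ← zpow_mul, ← zpow_mul, ← zpow_add₀ h0, ← zpow_add₀ h0]
        congr 1
        push_cast
        rw [hki]
        ring
      simp only
      linear_combination ((-1) ^ r * qbinom (qq ^ 2) (((j + k + 1 : ℕ) : ℤ) - 1) j *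
        (qq ^ (1 - ((j + k + 1 : ℕ) : ℤ))) ^ i *
          (qq ^ (((j + k + 1 : ℕ) : ℤ) + (w - r))) ^ j) * ht +
        ((-1) ^ r * qbinom (qq ^ 2) (((j + k + 1 : ℕ) : ℤ) - 1) j *
          qbinom qq w ((k + 1 : ℕ) : ℤ) * qbinom qq ((k + 1 : ℕ) : ℤ) (r : ℤ)) * he
    simp only
    rw [sum_congr rfl key, ← mul_sum, alt_sum gen_qq, mul_zero]

/-- `T(w,u,0) = 0` for every integer `w` and every positive integer `u`. -/
theorem T_ell_zero (w : ℤ) (u : ℕ) (hu : 0 < u) : T w u 0 = 0 := by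
  obtain ⟨u, rfl⟩ : ∃ k, u = k + 1 := ⟨u - 1, by omega⟩
  rw [T_zero_eq]
  simp only [sg_sub, mul_assoc]
  rw [← mul_sum]
  have := T_ell_zero_aux w u
  simp only [mul_assoc] at this
  rw [this, mul_zero]

end
end
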